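/- Let X : ℕ → ℝ satisfy X(0) = 0, X(t+1) = max(X(t) - γ, 0) + p(t) with γ ≥ 0, p(t) ≥ 0. If X is rate stable, i.e. X(t)/t → 0 as t → ∞, then limsup_{t→∞} (1/t)∑_{τ=0}^{t-1} p(τ) ≤ γ. -/

import Mathlib

theorem rate_stable_implies_power_constraint (X p : ℕ → ℝ) (γ : ℝ) (hγ : 0 ≤ γ)
    (hX0 : X 0 = 0) (hp : ∀ t, 0 ≤ p t)
    (hX : ∀ t, X (t + 1) = max (X t - γ) 0 + p t)
    (hrate : Filter.Tendsto (fun t : ℕ => X t / (t : ℝ)) Filter.atTop (nhds 0)) :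
    Filter.limsup (fun t : ℕ => (∑ τ ∈ Finset.range t, p τ) / (t : ℝ)) Filter.atTop ≤ γ := by
  have hsum : ∀ t : ℕ, ∑ τ ∈ Finset.range t, p τ ≤ X t + γ * t := by
    intro t
    induction t with
    | zero => simp [hX0]
    | succ n ih =>
      rw [Finset.sum_range_succ, hX n]
      push_cast
      have := le_max_left (X n - γ) 0
      linarith
  have hlim : Filter.Tendsto (fun t : ℕ => X t / (t : ℝ) + γ) Filter.atTop (nhds γ) := by
    simpa using hrate.add_const γ
  have hle : ∀ t : ℕ, (∑ τ ∈ Finset.range t, p τ) / (t : ℝ) ≤ X t / (t : ℝ) + γ := by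
    intro t
    rcases Nat.eq_zero_or_pos t with h | h
    · subst h; simpa using hγ
    · have ht : (0 : ℝ) < t := by exact_mod_cast h
      rw [div_le_iff₀ ht, add_mul, div_mul_cancel₀ _ ht.ne']
      exact hsum t
  rw [← hlim.limsup_eq]
  refine Filter.limsup_le_limsup (Filter.Eventually.of_forall hle) ?_ hlim.isBoundedUnder_le
  refine Filter.IsBoundedUnder.isCoboundedUnder_le ⟨0, ?_⟩
  rw [Filter.eventually_map]
  exact Filter.Eventually.of_forall fun t =>
    div_nonneg (Finset.sum_nonneg fun i _ => hp i) (Nat.cast_nonneg t)
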